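/- Let m ≥ 4 be even and e = m/2. Then the dual code C̄_E^⊥ has dimension 1 + 3m/2 over F_2 and minimum nonzero Hamming weight 2^{m−1} − 2^{(m−2)/2}, with weight distribution: the number of codewords of weight 0 is 1; of weight 2^{m−1} − 2^{(m−2)/2} is (2^{m/2} − 1)·2^m; of weight 2^{m−1} is 2^{m+1} − 2; of weight 2^{m−1} + 2^{(m−2)/2} is (2^{m/2} − 1)·2^m; of weight 2^m is 1; and there are no codewords of any other weight. Moreover, the extended code C̄_E has length 2^m, dimension 2^m − 1 − 3m/2, and minimum nonzero Hamming weight 4. -/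

import Mathlib

open Polynomial Finset

/-- The polynomial `c₀ + c₁x + ⋯ + c_{n−1}x^{n−1}` associated to a vector. -/
noncomputable def codePoly {n : ℕ} (c : Fin n → ZMod 2) : Polynomial (ZMod 2) :=
  ∑ i : Fin n, Polynomial.C (c i) * Polynomial.X ^ (i : ℕ)

/-- The generator polynomial `g_E(x) = M_α(x) · M_{α^{1+2^e}}(x)`. -/
noncomputable def gE (m e : ℕ) (α : GaloisField 2 m) : Polynomial (ZMod 2) :=
  minpoly (ZMod 2) α * minpoly (ZMod 2) (α ^ (1 + 2 ^ e))

/-- The binary cyclic code `C_E` of length `2^m − 1` with generator polynomial `g_E`. -/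
def CE (m e : ℕ) (α : GaloisField 2 m) : Set (Fin (2 ^ m - 1) → ZMod 2) :=
  {c | gE m e α ∣ codePoly c}

/-- The extended code `C̄_E ⊆ F_2^{2^m}`: the first `2^m − 1` coordinates form a codeword
of `C_E` and all `2^m` coordinates sum to zero. -/
def CEbar (m e : ℕ) (α : GaloisField 2 m) : Set (Fin (2 ^ m) → ZMod 2) :=
  {c | (fun i : Fin (2 ^ m - 1) => c (Fin.castLE (Nat.sub_le _ _) i)) ∈ CE m e α ∧
       ∑ i, c i = 0}

/-- The dual of a set of vectors over a commutative ring, as a submodule. -/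
def dualCode {n : ℕ} {F : Type*} [CommRing F] (C : Set (Fin n → F)) :
    Submodule F (Fin n → F) where
  carrier := {y | ∀ c ∈ C, ∑ i, y i * c i = 0}
  add_mem' := by
    intro a b ha hb c hc
    have h1 := ha c hc
    have h2 := hb c hc
    simp only [Pi.add_apply, add_mul, Finset.sum_add_distrib, h1, h2, add_zero]
  zero_mem' := by intro c hc; simp
  smul_mem' := by
    intro r a ha c hc
    have h1 := ha c hc
    simp only [Pi.smul_apply, smul_eq_mul, mul_assoc, ← Finset.mul_sum, h1, mul_zero]

lemma codePoly_add {n : ℕ} (a b : Fin n → ZMod 2) :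
    codePoly (fun i => a i + b i) = codePoly a + codePoly b := by
  simp [codePoly, Finset.sum_add_distrib, add_mul]

lemma codePoly_smul {n : ℕ} (r : ZMod 2) (a : Fin n → ZMod 2) :
    codePoly (fun i => r * a i) = Polynomial.C r * codePoly a := by
  simp [codePoly, Finset.mul_sum, mul_assoc]

/-- The extended code `C̄_E`, as an `F_2`-submodule of `F_2^{2^m}`. -/
noncomputable def CEbarSub (m e : ℕ) (α : GaloisField 2 m) :
    Submodule (ZMod 2) (Fin (2 ^ m) → ZMod 2) where
  carrier := CEbar m e α
  add_mem' := by
    rintro a b ⟨ha1, ha2⟩ ⟨hb1, hb2⟩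
    refine ⟨?_, ?_⟩
    · show gE m e α ∣
        codePoly (fun i : Fin (2 ^ m - 1) => (a + b) (Fin.castLE (Nat.sub_le _ _) i))
      have h : (fun i : Fin (2 ^ m - 1) => (a + b) (Fin.castLE (Nat.sub_le _ _) i)) =
          (fun i : Fin (2 ^ m - 1) =>
            a (Fin.castLE (Nat.sub_le _ _) i) + b (Fin.castLE (Nat.sub_le _ _) i)) := rfl
      rw [h, codePoly_add]
      exact dvd_add ha1 hb1
    · simp only [Pi.add_apply, Finset.sum_add_distrib, ha2, hb2, add_zero]
  zero_mem' := by
    refine ⟨?_, by simp⟩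
    show gE m e α ∣
      codePoly (fun i : Fin (2 ^ m - 1) => (0 : Fin (2 ^ m) → ZMod 2) (Fin.castLE (Nat.sub_le _ _) i))
    have h : (fun i : Fin (2 ^ m - 1) => (0 : Fin (2 ^ m) → ZMod 2) (Fin.castLE (Nat.sub_le _ _) i)) =
        (fun _ : Fin (2 ^ m - 1) => (0 : ZMod 2)) := rfl
    rw [h]
    simp [codePoly]
  smul_mem' := by
    rintro r a ⟨ha1, ha2⟩
    refine ⟨?_, ?_⟩
    · show gE m e α ∣
        codePoly (fun i : Fin (2 ^ m - 1) => (r • a) (Fin.castLE (Nat.sub_le _ _) i))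
      have h : (fun i : Fin (2 ^ m - 1) => (r • a) (Fin.castLE (Nat.sub_le _ _) i)) =
          (fun i : Fin (2 ^ m - 1) => r * a (Fin.castLE (Nat.sub_le _ _) i)) := rfl
      rw [h, codePoly_smul]
      exact Dvd.dvd.mul_left ha1 _
    · simp only [Pi.smul_apply, smul_eq_mul, ← Finset.mul_sum, ha2, mul_zero]

/-!
Let `K ⊆ L` be the fields with `2 ^ e` and `2 ^ m` elements and label the coordinates of the
extended code by the points of `L`. Since `x ^ (1 + 2 ^ e)` is the norm `N x` of `L / K`, a word `c`
lies in the extended code iff `∑ c_x = 0`, `∑ c_x x = 0` and `∑ c_x N x = 0`. By nondegeneracy of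
the trace forms these are the words orthogonal to all the functions
`x ↦ t + Tr_{L/F} (a x) + Tr_{K/F} (b N x)` with `F` the prime field, `t ∈ F`, `a ∈ L` and `b ∈ K`,
so these functions make up the dual code.

Such a function is constant for `a = b = 0` and balanced for `a ≠ 0 = b`. For `b ≠ 0` it is bent:
polarizing the norm shows that each derivative in a nonzero direction is a constant plus a nonzero
linear form. A bent function has one of two weights. Complementation exchanges them, so they occur
equally often.

A word of weight two in the extended code would force two points to coincide, and all weights are
even. Weight four is attained on a quadruple in `K` with sum zero, since there `N x = x ^ 2`.
-/

section BooleanFunctions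

/-- The nontrivial character `z ↦ (-1) ^ z` of `ZMod 2`, taking integer values. -/
def signChar : AddChar (ZMod 2) ℤ := AddChar.zmodChar 2 (ζ := -1) (by norm_num)

lemma signChar_eq_ite (z : ZMod 2) : signChar z = if z ≠ 0 then -1 else 1 := by
  revert z; decide

variable {ι : Type*} [Fintype ι]

lemma sum_signChar_add_two_mul_hammingNorm (f : ι → ZMod 2) :
    ∑ i, signChar (f i) + 2 * (hammingNorm f : ℤ) = Fintype.card ι := by
  have h : ∀ i, signChar (f i) = 1 - 2 * (if f i ≠ 0 then 1 else 0) := fun i => by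
    rw [signChar_eq_ite]; split_ifs <;> norm_num
  simp only [h, sum_sub_distrib, ← mul_sum, hammingNorm, sum_boole, sum_const, card_univ,
    nsmul_eq_mul, mul_one, sub_add_cancel]

lemma hammingNorm_one_add_add_hammingNorm (f : ι → ZMod 2) :
    hammingNorm (1 + f) + hammingNorm f = Fintype.card ι := by
  have hf := sum_signChar_add_two_mul_hammingNorm f
  have hf1 := sum_signChar_add_two_mul_hammingNorm (1 + f)
  have hneg : ∑ i, signChar ((1 + f) i) = -∑ i, signChar (f i) := by
    simp only [Pi.add_apply, Pi.one_apply, AddChar.map_add_eq_mul, signChar_eq_ite 1,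
      ne_eq, one_ne_zero, not_false_eq_true, if_true, neg_one_mul, sum_neg_distrib]
  lia

lemma hammingNorm_eq_card_iff (f : ι → ZMod 2) : hammingNorm f = Fintype.card ι ↔ f = 1 := by
  rw [← hammingNorm_one_add_add_hammingNorm f, right_eq_add, hammingNorm_eq_zero,
    funext_iff, funext_iff]
  exact forall_congr' fun i => by
    rw [Pi.add_apply, Pi.zero_apply, CharTwo.add_eq_zero, eq_comm]

lemma hammingNorm_comp_of_bijective {κ F : Type*} [Fintype κ] [Zero F] [DecidableEq F]
    (f : κ → F) {P : ι → κ} (hP : Function.Bijective P) :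
    hammingNorm (f ∘ P) = hammingNorm f := by
  simp only [hammingNorm, card_filter, Function.comp_apply]
  exact hP.sum_comp fun x => if f x ≠ 0 then 1 else 0

lemma sum_zmodTwo_smul {M : Type*} [AddCommGroup M] [Module (ZMod 2) M] (c : ι → ZMod 2)
    (g : ι → M) : ∑ i, c i • g i = ∑ i with c i ≠ 0, g i := by
  have h (z : ZMod 2) (x : M) : z • x = if z ≠ 0 then x else 0 := by
    obtain rfl | rfl : z = 0 ∨ z = 1 := by revert z; decide
    · rw [zero_smul, if_neg (not_not_intro rfl)]
    · rw [one_smul, if_pos one_ne_zero]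
  rw [sum_filter]
  exact sum_congr rfl fun i _ => h _ _

variable {V : Type*} [AddGroup V] [Fintype V]

lemma sum_signChar_eq_zero {φ : V →+ ZMod 2} (hφ : φ ≠ 0) : ∑ x, signChar (φ x) = 0 := by
  refine AddChar.sum_eq_zero_of_ne_one (ψ := signChar.compAddMonoidHom φ) fun h => hφ ?_
  refine AddMonoidHom.ext fun x => by_contra fun (hne : φ x ≠ 0) => ?_
  have hx : signChar (φ x) = 1 := DFunLike.congr_fun h x
  rw [signChar_eq_ite] at hx
  rw [if_pos hne] at hx
  norm_num at hx

lemma two_mul_hammingNorm_const_add {φ : V →+ ZMod 2} (hφ : φ ≠ 0) (c : ZMod 2) :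
    2 * hammingNorm (fun x => c + φ x) = Fintype.card V := by
  have h := sum_signChar_add_two_mul_hammingNorm fun x => c + φ x
  simp only [AddChar.map_add_eq_mul, ← mul_sum, sum_signChar_eq_zero hφ, mul_zero] at h
  lia

/-- A Boolean function on a finite group is bent if each of its derivatives `x ↦ f (x + d) + f x`
in a nonzero direction takes the values `0` and `1` equally often. -/
def IsBent (f : V → ZMod 2) : Prop :=
  ∀ d ≠ 0, ∑ x, signChar (f (x + d) + f x) = 0

lemma IsBent.sum_signChar_sq {f : V → ZMod 2} (hf : IsBent f) :
    (∑ x, signChar (f x)) ^ 2 = Fintype.card V := by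
  calc (∑ x, signChar (f x)) ^ 2
      = ∑ x, ∑ y, signChar (f y + f x) := by
        simp only [sq, sum_mul_sum, AddChar.map_add_eq_mul, mul_comm]
    _ = ∑ x, ∑ d, signChar (f (x + d) + f x) :=
        sum_congr rfl fun x _ =>
          (Equiv.sum_comp (Equiv.addLeft x) fun y => signChar (f y + f x)).symm
    _ = ∑ d, ∑ x, signChar (f (x + d) + f x) := sum_comm
    _ = ∑ x, signChar (f (x + 0) + f x) :=
        Fintype.sum_eq_single 0 hf
    _ = Fintype.card V := by
        simp only [add_zero, CharTwo.add_self_eq_zero, AddChar.map_zero_eq_one, sum_const,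
          card_univ, nsmul_eq_mul, mul_one]

lemma IsBent.hammingNorm_eq_or_eq {f : V → ZMod 2} (hf : IsBent f) {k : ℕ}
    (hV : Fintype.card V = (2 ^ (k + 1)) ^ 2) :
    hammingNorm f = 2 ^ (2 * k + 1) - 2 ^ k ∨ hammingNorm f = 2 ^ (2 * k + 1) + 2 ^ k := by
  have hsum := sum_signChar_add_two_mul_hammingNorm f
  have hcard : Fintype.card V = 2 * 2 ^ (2 * k + 1) := by rw [hV]; ring
  have hsq : (∑ x, signChar (f x)) ^ 2 = (2 * ((2 ^ k : ℕ) : ℤ)) ^ 2 := by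
    rw [hf.sum_signChar_sq, hV]; push_cast; ring
  rcases sq_eq_sq_iff_eq_or_eq_neg.1 hsq with h | h <;> lia

end BooleanFunctions

section DualCode

variable {n : ℕ} {F : Type*} [Field F]

lemma dotProductBilin_nondegenerate :
    (dotProductBilin F F : LinearMap.BilinForm F (Fin n → F)).Nondegenerate :=
  ⟨dotProduct_eq_zero, fun v hv => dotProduct_eq_zero v fun w => by
    rw [dotProduct_comm]; exact hv w⟩

lemma dotProductBilin_isRefl :
    LinearMap.BilinForm.IsRefl (dotProductBilin F F : LinearMap.BilinForm F (Fin n → F)) :=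
  fun v w h => (dotProduct_comm w v).trans h

lemma dualCode_eq_orthogonal (W : Submodule F (Fin n → F)) :
    dualCode (W : Set (Fin n → F)) =
      LinearMap.BilinForm.orthogonal (dotProductBilin F F) W := by
  ext y
  exact forall₂_congr fun c _ => by
    change y ⬝ᵥ c = 0 ↔ c ⬝ᵥ y = 0
    rw [dotProduct_comm]

lemma dualCode_dualCode (W : Submodule F (Fin n → F)) :
    dualCode (dualCode (W : Set (Fin n → F)) : Set (Fin n → F)) = W := by
  rw [dualCode_eq_orthogonal, dualCode_eq_orthogonal,
    LinearMap.BilinForm.orthogonal_orthogonal dotProductBilin_nondegenerate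
      dotProductBilin_isRefl]

lemma finrank_dualCode (W : Submodule F (Fin n → F)) :
    Module.finrank F (dualCode (W : Set (Fin n → F))) = n - Module.finrank F W := by
  rw [dualCode_eq_orthogonal,
    LinearMap.BilinForm.finrank_orthogonal dotProductBilin_nondegenerate, Module.finrank_fin_fun]

end DualCode

section NormTraceCode

variable {F L : Type*} (K : Type*) [Field F] [Field K] [Field L] [Algebra F K] [Algebra F L]
  [Algebra K L]

/-- The function `x ↦ c + Tr_{L/F} (a x) + Tr_{K/F} (b N_{L/K} x)` on `L` with parameters
`(c, a, b)`. -/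
noncomputable def normTraceFun : F × L × K →ₗ[F] L → F where
  toFun v x := v.1 + Algebra.trace F L (v.2.1 * x) + Algebra.trace F K (v.2.2 * Algebra.norm K x)
  map_add' v w := by
    ext x
    simp only [Prod.fst_add, Prod.snd_add, add_mul, map_add, Pi.add_apply]
    ring
  map_smul' r v := by
    ext x
    simp only [Prod.smul_fst, Prod.smul_snd, smul_mul_assoc, map_smul, Pi.smul_apply,
      RingHom.id_apply, smul_add]

lemma normTraceFun_apply (v : F × L × K) (x : L) :
    normTraceFun K v x =
      v.1 + Algebra.trace F L (v.2.1 * x) + Algebra.trace F K (v.2.2 * Algebra.norm K x) :=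
  rfl

lemma normTraceFun_const (c : F) : normTraceFun K (c, (0 : L), 0) = fun _ => c := by
  ext x
  simp only [normTraceFun_apply, zero_mul, map_zero, add_zero]

variable (F) in
/-- The evaluation code of the functions `normTraceFun K v` at the points `P i`. -/
noncomputable def normTraceCode {ι : Type*} (P : ι → L) : Submodule F (ι → F) :=
  LinearMap.range (LinearMap.funLeft F F P ∘ₗ normTraceFun K)

variable {K} in
lemma mem_normTraceCode {ι : Type*} {P : ι → L} {y : ι → F} :
    y ∈ normTraceCode F K P ↔ ∃ v, normTraceFun K v ∘ P = y :=
  Iff.rfl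

lemma one_mem_normTraceCode {ι : Type*} (P : ι → L) : 1 ∈ normTraceCode F K P :=
  mem_normTraceCode.2 ⟨(1, 0, 0), congrArg (· ∘ P) (normTraceFun_const K (1 : F))⟩

lemma mem_dualCode_normTraceCode [FiniteDimensional F K] [Algebra.IsSeparable F K]
    [FiniteDimensional F L] [Algebra.IsSeparable F L] {n : ℕ} (P : Fin n → L) (y : Fin n → F) :
    y ∈ dualCode (normTraceCode F K P : Set (Fin n → F)) ↔
      ∑ i, y i = 0 ∧ ∑ i, y i • P i = 0 ∧ ∑ i, y i • Algebra.norm K (P i) = 0 := by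
  have pairing (v : F × L × K) : ∑ i, y i * normTraceFun K v (P i) =
      v.1 * ∑ i, y i + Algebra.trace F L (∑ i, y i • P i * v.2.1) +
        Algebra.trace F K ((∑ i, y i • Algebra.norm K (P i)) * v.2.2) := by
    simp only [normTraceFun_apply, sum_mul, mul_sum, map_sum, ← sum_add_distrib, smul_mul_assoc,
      map_smul, smul_eq_mul, mul_comm (P _), mul_comm (Algebra.norm K _)]
    exact sum_congr rfl fun i _ => by ring
  constructor
  · intro hy
    have hy' (v : F × L × K) : ∑ i, y i * normTraceFun K v (P i) = 0 := hy _ ⟨v, rfl⟩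
    simp only [pairing, ← sum_mul] at hy'
    refine ⟨by simpa using hy' (1, 0, 0), (traceForm_nondegenerate F L).1 _ fun a => ?_,
      (traceForm_nondegenerate F K).1 _ fun b => ?_⟩
    · simpa only [Algebra.traceForm_apply, zero_mul, mul_zero, map_zero, zero_add, add_zero]
        using hy' (0, a, 0)
    · simpa only [Algebra.traceForm_apply, zero_mul, mul_zero, map_zero, zero_add]
        using hy' (0, 0, b)
  · rintro ⟨hc, ha, hb⟩ _ ⟨v, rfl⟩
    refine (pairing v).trans ?_
    rw [← sum_mul, hc, ha, hb, mul_zero, zero_mul, zero_mul, map_zero, map_zero, add_zero,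
      add_zero]

end NormTraceCode

section QuadraticExtension

lemma norm_add_of_finrank_eq_two {R S : Type*} [CommRing R] [Nontrivial R] [CommRing S]
    [Algebra R S] [Module.Free R S] (h : Module.finrank R S = 2) (x y : S) :
    Algebra.norm R (x + y) = Algebra.norm R x + Algebra.norm R y +
      (Algebra.trace R S x * Algebra.trace R S y - Algebra.trace R S (x * y)) := by
  have : Module.Finite R S := Module.finite_of_finrank_eq_succ h
  let b := Module.finBasisOfFinrankEq R S h
  simp only [Algebra.norm_eq_matrix_det b, Algebra.trace_eq_matrix_trace b, map_add, map_mul,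
    Matrix.det_fin_two, Matrix.trace_fin_two, Matrix.mul_apply, Fin.sum_univ_two, Matrix.add_apply]
  ring

variable {F K L : Type*} [Field F] [Field K] [Field L] [Algebra K L]
  [Algebra.IsQuadraticExtension K L]

variable (K L) in
lemma natCard_eq_sq : Nat.card L = Nat.card K ^ 2 := by
  have h := Algebra.IsQuadraticExtension.finrank_eq_two K L
  have := Module.finite_of_finrank_eq_succ h
  rw [Module.natCard_eq_pow_finrank (K := K), h]

lemma trace_sub_self_ne_zero {d : L} (hd : d ≠ 0) :
    algebraMap K L (Algebra.trace K L d) - d ≠ 0 := by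
  intro h
  obtain ⟨t, rfl⟩ : ∃ t, algebraMap K L t = d := ⟨_, sub_eq_zero.1 h⟩
  rw [Algebra.trace_algebraMap, Algebra.IsQuadraticExtension.finrank_eq_two, two_nsmul, map_add,
    add_sub_cancel_right] at h
  exact hd h

variable [Algebra F K] [Algebra F L] [IsScalarTower F K L] [FiniteDimensional F K]

lemma normTraceFun_add_apply (v : F × L × K) (x d : L) :
    normTraceFun K v (x + d) = normTraceFun K v x + normTraceFun K (0, v.2) d +
      Algebra.trace F L (v.2.2 • (algebraMap K L (Algebra.trace K L d) - d) * x) := by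
  have h : Algebra.trace F L (v.2.2 • (algebraMap K L (Algebra.trace K L d) - d) * x) =
      Algebra.trace F K (v.2.2 * (Algebra.trace K L x * Algebra.trace K L d -
        Algebra.trace K L (x * d))) := by
    have := Module.finite_of_finrank_eq_succ
      (Algebra.IsQuadraticExtension.finrank_eq_two K L)
    rw [← Algebra.trace_trace (S := K), smul_mul_assoc, (Algebra.trace K L).map_smul,
      sub_mul, map_sub, ← Algebra.smul_def, (Algebra.trace K L).map_smul, smul_eq_mul, smul_eq_mul,
      mul_comm d, mul_comm (Algebra.trace K L d)]
  rw [h]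
  simp only [normTraceFun_apply, mul_add, map_add,
    norm_add_of_finrank_eq_two (Algebra.IsQuadraticExtension.finrank_eq_two K L)]
  ring

end QuadraticExtension

section Weights

lemma two_pow_lt_two_pow_two_mul_add_one (k : ℕ) : 2 ^ k < 2 ^ (2 * k + 1) :=
  Nat.pow_lt_pow_right one_lt_two (by lia)

variable {K L : Type*} [Field K] [Field L] [Algebra (ZMod 2) K] [Algebra (ZMod 2) L] [Algebra K L]
  [Fintype L]

lemma two_mul_hammingNorm_normTraceFun_linear (c : ZMod 2) {a : L} (ha : a ≠ 0) :
    2 * hammingNorm (normTraceFun K (c, a, 0)) = Fintype.card L := by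
  have hφ : (Algebra.traceForm (ZMod 2) L a).toAddMonoidHom ≠ 0 := fun h =>
    ha ((traceForm_nondegenerate (ZMod 2) L).1 a (DFunLike.congr_fun h))
  rw [← two_mul_hammingNorm_const_add hφ c]
  congr with x
  rw [normTraceFun_apply, zero_mul, map_zero, add_zero]
  rfl

variable [Finite K] [Algebra.IsQuadraticExtension K L]

lemma isBent_normTraceFun {v : ZMod 2 × L × K} (hv : v.2.2 ≠ 0) : IsBent (normTraceFun K v) := by
  intro d hd
  have hφ : (Algebra.traceForm (ZMod 2) L
      (v.2.2 • (algebraMap K L (Algebra.trace K L d) - d))).toAddMonoidHom ≠ 0 := fun h =>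
    smul_ne_zero hv (trace_sub_self_ne_zero hd)
      ((traceForm_nondegenerate (ZMod 2) L).1 _ (DFunLike.congr_fun h))
  calc ∑ x, signChar (normTraceFun K v (x + d) + normTraceFun K v x)
      = ∑ x, signChar (normTraceFun K (0, v.2) d) * signChar (Algebra.traceForm (ZMod 2) L
          (v.2.2 • (algebraMap K L (Algebra.trace K L d) - d)) x) := by
        refine sum_congr rfl fun x _ => ?_
        rw [← AddChar.map_add_eq_mul, normTraceFun_add_apply, Algebra.traceForm_apply]
        congr 1
        linear_combination CharTwo.add_self_eq_zero (normTraceFun K v x)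
    _ = 0 := by
        rw [← mul_sum]
        exact mul_eq_zero_of_right _ (sum_signChar_eq_zero hφ)

variable {k : ℕ} (hK : Nat.card K = 2 ^ (k + 1))
include hK

lemma hammingNorm_normTraceFun_cases (v : ZMod 2 × L × K) :
    v = 0 ∧ hammingNorm (normTraceFun K v) = 0 ∨
    v = (1, 0, 0) ∧ hammingNorm (normTraceFun K v) = 2 * 2 ^ (2 * k + 1) ∨
    (v.2.1 ≠ 0 ∧ v.2.2 = 0) ∧ hammingNorm (normTraceFun K v) = 2 ^ (2 * k + 1) ∨
    v.2.2 ≠ 0 ∧ (hammingNorm (normTraceFun K v) = 2 ^ (2 * k + 1) - 2 ^ k ∨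
      hammingNorm (normTraceFun K v) = 2 ^ (2 * k + 1) + 2 ^ k) := by
  have hL : Fintype.card L = (2 ^ (k + 1)) ^ 2 := by
    rw [← Nat.card_eq_fintype_card, natCard_eq_sq K L, hK]
  have hL' : Fintype.card L = 2 * 2 ^ (2 * k + 1) := by rw [hL]; ring
  obtain ⟨c, a, b⟩ := v
  by_cases hb : b = 0
  · subst hb
    by_cases ha : a = 0
    · subst ha
      obtain rfl | rfl : c = 0 ∨ c = 1 := by revert c; decide
      · exact .inl ⟨rfl, hammingNorm_eq_zero.2 (map_zero _)⟩
      · exact .inr <| .inl ⟨rfl, hL' ▸ (hammingNorm_eq_card_iff _).2 (normTraceFun_const K 1)⟩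
    · have := two_mul_hammingNorm_normTraceFun_linear (K := K) c ha
      exact .inr <| .inr <| .inl ⟨⟨ha, rfl⟩, by lia⟩
  · exact .inr <| .inr <| .inr ⟨hb, (isBent_normTraceFun hb).hammingNorm_eq_or_eq hL⟩

lemma hammingNorm_normTraceFun_eq_mid_iff (v : ZMod 2 × L × K) :
    hammingNorm (normTraceFun K v) = 2 ^ (2 * k + 1) ↔ v.2.1 ≠ 0 ∧ v.2.2 = 0 := by
  have := hammingNorm_normTraceFun_cases hK v
  have := two_pow_lt_two_pow_two_mul_add_one k
  grind [Prod.fst_zero, Prod.snd_zero]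

lemma hammingNorm_normTraceFun_eq_low_or_high_iff (v : ZMod 2 × L × K) :
    hammingNorm (normTraceFun K v) = 2 ^ (2 * k + 1) - 2 ^ k ∨
      hammingNorm (normTraceFun K v) = 2 ^ (2 * k + 1) + 2 ^ k ↔ v.2.2 ≠ 0 := by
  have := hammingNorm_normTraceFun_cases hK v
  have := two_pow_lt_two_pow_two_mul_add_one k
  grind [Prod.fst_zero, Prod.snd_zero]

omit [Fintype L] in
lemma normTraceFun_injective [Finite L] :
    Function.Injective (normTraceFun K : ZMod 2 × L × K →ₗ[ZMod 2] L → ZMod 2) := by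
  have := Fintype.ofFinite L
  refine (injective_iff_map_eq_zero _).2 fun v hv => ?_
  have hv0 : hammingNorm (normTraceFun K v) = 0 := hammingNorm_eq_zero.2 hv
  have := hammingNorm_normTraceFun_cases hK v
  have := two_pow_lt_two_pow_two_mul_add_one k
  lia

end Weights

section WeightDistribution

section Submodule

variable {ι F : Type*} [Fintype ι] [Field F] [DecidableEq F] (C : Submodule F (ι → F))

lemma ncard_hammingNorm_eq_zero : {y | y ∈ C ∧ hammingNorm y = 0}.ncard = 1 := by
  refine Set.ncard_eq_one.2 ⟨0, Set.ext fun y => ?_⟩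
  simp only [hammingNorm_eq_zero, Set.mem_ofPred_eq, Set.mem_singleton_iff, and_iff_right_iff_imp]
  rintro rfl
  exact C.zero_mem

variable {C : Submodule (ZMod 2) (ι → ZMod 2)} (hC : 1 ∈ C)
include hC

lemma ncard_hammingNorm_eq_card : {y | y ∈ C ∧ hammingNorm y = Fintype.card ι}.ncard = 1 := by
  refine Set.ncard_eq_one.2 ⟨1, Set.ext fun y => ?_⟩
  simp only [hammingNorm_eq_card_iff, Set.mem_ofPred_eq, Set.mem_singleton_iff,
    and_iff_right_iff_imp]
  rintro rfl
  exact hC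

lemma ncard_hammingNorm_eq_of_add_eq_card {w w' : ℕ} (hw : w + w' = Fintype.card ι) :
    {y | y ∈ C ∧ hammingNorm y = w}.ncard = {y | y ∈ C ∧ hammingNorm y = w'}.ncard := by
  rw [← Set.ncard_image_of_injective _ (add_right_injective (1 : ι → ZMod 2))]
  congr 1
  ext y
  have h1 : 1 + (1 + y) = y := funext fun i => CharTwo.add_cancel_left 1 (y i)
  constructor
  · rintro ⟨z, ⟨hz, rfl⟩, rfl⟩
    have := hammingNorm_one_add_add_hammingNorm z
    exact ⟨C.add_mem hC hz, by lia⟩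
  · rintro ⟨hy, rfl⟩
    have := hammingNorm_one_add_add_hammingNorm y
    exact ⟨1 + y, ⟨C.add_mem hC hy, by lia⟩, h1⟩

end Submodule

variable {K L ι : Type*} [Field K] [Field L] [Algebra (ZMod 2) K] [Algebra (ZMod 2) L]
  [Algebra K L] [Algebra.IsQuadraticExtension K L]

variable {k : ℕ} (hK : Nat.card K = 2 ^ (k + 1)) {P : ι → L} (hP : P.Bijective)
include hK hP

lemma finrank_normTraceCode [Finite ι] [Finite K] :
    Module.finrank (ZMod 2) (normTraceCode (ZMod 2) K P) =
      1 + (Module.finrank (ZMod 2) L + Module.finrank (ZMod 2) K) := by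
  have := Finite.of_surjective P hP.2
  have hinj : Function.Injective (LinearMap.funLeft (ZMod 2) (ZMod 2) P ∘ₗ normTraceFun K :
      ZMod 2 × L × K →ₗ[ZMod 2] ι → ZMod 2) :=
    (LinearMap.funLeft_injective_of_surjective (ZMod 2) (ZMod 2) P hP.2).comp
      (normTraceFun_injective hK)
  rw [normTraceCode, LinearMap.finrank_range_of_inj hinj, Module.finrank_prod, Module.finrank_prod,
    Module.finrank_self]

variable [Fintype ι]

lemma ncard_normTraceCode_low_eq_high :
    {y | y ∈ normTraceCode (ZMod 2) K P ∧ hammingNorm y = 2 ^ (2 * k + 1) - 2 ^ k}.ncard =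
      {y | y ∈ normTraceCode (ZMod 2) K P ∧ hammingNorm y = 2 ^ (2 * k + 1) + 2 ^ k}.ncard := by
  refine ncard_hammingNorm_eq_of_add_eq_card (one_mem_normTraceCode K P) ?_
  have := two_pow_lt_two_pow_two_mul_add_one k
  rw [← Nat.card_eq_fintype_card, Nat.card_eq_of_bijective P hP, natCard_eq_sq K L, hK]
  ring_nf at *
  lia

variable [Finite K]

lemma hammingNorm_mem_of_mem_normTraceCode {y : ι → ZMod 2}
    (hy : y ∈ normTraceCode (ZMod 2) K P) :
    hammingNorm y ∈ ({0, 2 ^ (2 * k + 1) - 2 ^ k, 2 ^ (2 * k + 1), 2 ^ (2 * k + 1) + 2 ^ k,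
      2 ^ (2 * (k + 1))} : Set ℕ) := by
  have := Fintype.ofBijective P hP
  obtain ⟨v, rfl⟩ := mem_normTraceCode.1 hy
  have := hammingNorm_normTraceFun_cases hK v
  have hpow : 2 ^ (2 * (k + 1)) = 2 * 2 ^ (2 * k + 1) := pow_succ' 2 (2 * k + 1)
  simp only [hammingNorm_comp_of_bijective _ hP, hpow, Set.mem_insert_iff, Set.mem_singleton_iff]
  tauto

lemma ncard_normTraceCode_eq [Fintype L] (p : ℕ → Prop) :
    {y | y ∈ normTraceCode (ZMod 2) K P ∧ p (hammingNorm y)}.ncard =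
      {v : ZMod 2 × L × K | p (hammingNorm (normTraceFun K v))}.ncard := by
  rw [← Set.ncard_image_of_injective _ (hP.2.injective_comp_right.comp (normTraceFun_injective hK))]
  congr 1
  have hnorm (v : ZMod 2 × L × K) := hammingNorm_comp_of_bijective (normTraceFun K v) hP
  ext y
  constructor
  · rintro ⟨⟨v, rfl⟩, hv⟩
    exact ⟨v, (congrArg p (hnorm v)).mp hv, rfl⟩
  · rintro ⟨v, hv, rfl⟩
    exact ⟨⟨v, rfl⟩, (congrArg p (hnorm v)).mpr hv⟩

lemma ncard_normTraceCode_mid :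
    {y | y ∈ normTraceCode (ZMod 2) K P ∧ hammingNorm y = 2 ^ (2 * k + 1)}.ncard =
      2 * (Nat.card L - 1) := by
  have := Fintype.ofBijective P hP
  have hset : {v : ZMod 2 × L × K | hammingNorm (normTraceFun K v) = 2 ^ (2 * k + 1)} =
      Set.univ ×ˢ {0}ᶜ ×ˢ {0} := by
    ext v
    simp only [hammingNorm_normTraceFun_eq_mid_iff hK, Set.mem_ofPred_eq, Set.mem_prod,
      Set.mem_univ, true_and, Set.mem_compl_iff, Set.mem_singleton_iff, ne_eq]
  rw [ncard_normTraceCode_eq hK hP (· = 2 ^ (2 * k + 1)), hset, Set.ncard_prod, Set.ncard_prod,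
    Set.ncard_univ, Set.ncard_compl, Set.ncard_singleton, Set.ncard_singleton, Nat.card_zmod,
    mul_one]

lemma ncard_normTraceCode_low_or_high :
    {y | y ∈ normTraceCode (ZMod 2) K P ∧ (hammingNorm y = 2 ^ (2 * k + 1) - 2 ^ k ∨
      hammingNorm y = 2 ^ (2 * k + 1) + 2 ^ k)}.ncard = 2 * (Nat.card L * (Nat.card K - 1)) := by
  have := Fintype.ofBijective P hP
  have hset : {v : ZMod 2 × L × K | hammingNorm (normTraceFun K v) = 2 ^ (2 * k + 1) - 2 ^ k ∨
      hammingNorm (normTraceFun K v) = 2 ^ (2 * k + 1) + 2 ^ k} =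
      Set.univ ×ˢ Set.univ ×ˢ {0}ᶜ := by
    ext v
    simp only [hammingNorm_normTraceFun_eq_low_or_high_iff hK, Set.mem_ofPred_eq, Set.mem_prod,
      Set.mem_univ, true_and, Set.mem_compl_iff, Set.mem_singleton_iff, ne_eq]
  rw [ncard_normTraceCode_eq hK hP fun w => w = 2 ^ (2 * k + 1) - 2 ^ k ∨
    w = 2 ^ (2 * k + 1) + 2 ^ k, hset, Set.ncard_prod, Set.ncard_prod, Set.ncard_univ,
    Set.ncard_univ, Set.ncard_compl, Set.ncard_singleton, Nat.card_zmod]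

lemma ncard_normTraceCode_low :
    {y | y ∈ normTraceCode (ZMod 2) K P ∧ hammingNorm y = 2 ^ (2 * k + 1) - 2 ^ k}.ncard =
      (Nat.card K - 1) * Nat.card L := by
  have hsum := ncard_normTraceCode_low_or_high hK hP
  have hdisj : Disjoint
      {y | y ∈ normTraceCode (ZMod 2) K P ∧ hammingNorm y = 2 ^ (2 * k + 1) - 2 ^ k}
      {y | y ∈ normTraceCode (ZMod 2) K P ∧ hammingNorm y = 2 ^ (2 * k + 1) + 2 ^ k} := by
    have : 0 < 2 ^ k := by positivity
    exact Set.disjoint_left.2 fun y hy hy' => by grind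
  simp only [and_or_left, Set.ofPred_or] at hsum
  rw [Set.ncard_union_eq hdisj, ← ncard_normTraceCode_low_eq_high hK hP] at hsum
  lia

lemma ncard_normTraceCode_high :
    {y | y ∈ normTraceCode (ZMod 2) K P ∧ hammingNorm y = 2 ^ (2 * k + 1) + 2 ^ k}.ncard =
      (Nat.card K - 1) * Nat.card L := by
  rw [← ncard_normTraceCode_low_eq_high hK hP, ncard_normTraceCode_low hK hP]

lemma isLeast_hammingNorm_normTraceCode :
    IsLeast {i | ∃ y ∈ normTraceCode (ZMod 2) K P, y ≠ 0 ∧ hammingNorm y = i}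
      (2 ^ (2 * k + 1) - 2 ^ k) := by
  have := Fintype.ofBijective P hP
  have hlt := two_pow_lt_two_pow_two_mul_add_one k
  constructor
  · have hpos : 0 < (Nat.card K - 1) * Nat.card L :=
      Nat.mul_pos (Nat.sub_pos_of_lt Finite.one_lt_card) Nat.card_pos
    rw [← ncard_normTraceCode_low hK hP] at hpos
    obtain ⟨y, hyC, hy⟩ := Set.nonempty_of_ncard_ne_zero hpos.ne'
    refine ⟨y, hyC, ?_, hy⟩
    rw [← hammingNorm_ne_zero_iff]
    lia
  · rintro _ ⟨y, hyC, hy0, rfl⟩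
    have hy := hammingNorm_mem_of_mem_normTraceCode hK hP hyC
    simp only [Set.mem_insert_iff, Set.mem_singleton_iff] at hy
    rw [← hammingNorm_ne_zero_iff] at hy0
    lia

end WeightDistribution

section MinimumDistance

variable {ι : Type*} [Fintype ι]

lemma natCast_hammingNorm (c : ι → ZMod 2) : (hammingNorm c : ZMod 2) = ∑ i, c i := by
  have h := sum_zmodTwo_smul c fun _ => (1 : ZMod 2)
  simp only [smul_eq_mul, mul_one, sum_const, nsmul_eq_mul] at h
  exact h.symm

lemma four_le_hammingNorm {V : Type*} [AddCommGroup V] [Module (ZMod 2) V] {P : ι → V}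
    (hP : P.Injective) {c : ι → ZMod 2} (hc : c ≠ 0) (hsum : ∑ i, c i = 0)
    (hsumP : ∑ i, c i • P i = 0) : 4 ≤ hammingNorm c := by
  have heven : 2 ∣ hammingNorm c := by
    rw [← ZMod.natCast_eq_zero_iff, natCast_hammingNorm, hsum]
  have hpos : 0 < hammingNorm c := hammingNorm_pos_iff.2 hc
  have hne_two : hammingNorm c ≠ 2 := fun h => by
    classical
    obtain ⟨i, j, hij, hsupp⟩ := card_eq_two.1 h
    rw [sum_zmodTwo_smul, hsupp, sum_pair hij] at hsumP
    refine hij (hP ?_)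
    rw [eq_neg_of_add_eq_zero_left hsumP, ZModModule.neg_eq_self]
  lia

section Indicator

variable {V : Type*} [DecidableEq V] {P : ι → V} (hP : P.Bijective) (S : Finset V)
include hP

lemma hammingNorm_ite_mem : hammingNorm (fun i => if P i ∈ S then (1 : ZMod 2) else 0) = #S := by
  simp only [hammingNorm, ne_eq, ite_eq_right_iff, one_ne_zero, imp_false, not_not]
  exact card_bijective P hP (by simp)

lemma sum_ite_mem_smul {M : Type*} [AddCommGroup M] [Module (ZMod 2) M] (g : V → M) :
    ∑ i, (if P i ∈ S then (1 : ZMod 2) else 0) • g (P i) = ∑ x ∈ S, g x := by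
  have := Fintype.ofBijective P hP
  rw [hP.sum_comp fun x => (if x ∈ S then (1 : ZMod 2) else 0) • g x]
  simp only [ite_smul, one_smul, zero_smul, sum_ite_mem, univ_inter]

end Indicator

lemma exists_card_eq_four_sum_eq_zero {K : Type*} [Field K] [CharP K 2] (hK : 2 < Nat.card K) :
    ∃ T : Finset K, #T = 4 ∧ ∑ x ∈ T, x = 0 := by
  classical
  have := Nat.finite_of_card_ne_zero (by lia : Nat.card K ≠ 0)
  obtain ⟨t, ht⟩ : ∃ t, t ∉ ({0, 1} : Set K) := by
    refine (Set.ne_univ_iff_exists_notMem _).1 fun h => ?_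
    rw [← Set.ncard_univ, ← h, Set.ncard_pair zero_ne_one] at hK
    exact hK.false
  obtain ⟨ht0, ht1⟩ : t ≠ 0 ∧ t ≠ 1 := by simpa using ht
  have h0 : (0 : K) ∉ ({1, t, 1 + t} : Finset K) := by
    simp [ht0.symm, ht1.symm, eq_comm (a := (0 : K)), CharTwo.add_eq_zero]
  have h1 : (1 : K) ∉ ({t, 1 + t} : Finset K) := by simp [ht1.symm, ht0]
  have h2 : t ∉ ({1 + t} : Finset K) := by simp
  refine ⟨{0, 1, t, 1 + t}, ?_, ?_⟩
  · rw [card_insert_of_notMem h0, card_insert_of_notMem h1, card_insert_of_notMem h2,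
      card_singleton]
  · rw [sum_insert h0, sum_insert h1, sum_insert h2, sum_singleton, zero_add, ← add_assoc,
      CharTwo.add_self_eq_zero]

variable {K L : Type*} [Field K] [Field L] [Algebra (ZMod 2) K] [Algebra (ZMod 2) L]
  [Algebra K L] [Algebra.IsQuadraticExtension K L] [Finite K]

lemma isLeast_hammingNorm_dualCode_normTraceCode (hK : 2 < Nat.card K) {n : ℕ} {P : Fin n → L}
    (hP : P.Bijective) :
    IsLeast {i | ∃ c ∈ dualCode (normTraceCode (ZMod 2) K P : Set (Fin n → ZMod 2)),
      c ≠ 0 ∧ hammingNorm c = i} 4 := by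
  classical
  have : Finite L := Finite.of_surjective P hP.2
  constructor
  · have : CharP K 2 := charP_of_injective_algebraMap' (ZMod 2) 2
    obtain ⟨T, hcard, hsum⟩ := exists_card_eq_four_sum_eq_zero hK
    let S : Finset L := T.map ⟨algebraMap K L, (algebraMap K L).injective⟩
    have hwt := hammingNorm_ite_mem hP S
    rw [card_map, hcard] at hwt
    refine ⟨_, (mem_dualCode_normTraceCode K P _).2 ⟨?_, ?_, ?_⟩, ?_, hwt⟩
    · rw [← natCast_hammingNorm, hwt]
      rfl
    · refine (sum_ite_mem_smul hP S id).trans ?_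
      simp only [S, sum_map, Function.Embedding.coeFn_mk, id]
      rw [← map_sum, hsum, map_zero]
    · rw [sum_ite_mem_smul hP S (Algebra.norm K), sum_map]
      simp only [Function.Embedding.coeFn_mk, Algebra.norm_algebraMap,
        Algebra.IsQuadraticExtension.finrank_eq_two]
      rw [← sum_pow_char, hsum, zero_pow two_ne_zero]
    · rw [← hammingNorm_ne_zero_iff, hwt]
      norm_num
  · rintro _ ⟨c, hc, hc0, rfl⟩
    obtain ⟨hsum, hsumP, -⟩ := (mem_dualCode_normTraceCode K P c).1 hc
    exact four_le_hammingNorm hP.1 hc0 hsum hsumP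

end MinimumDistance

section CyclicCode

section CoordinatePoint

/-- The points labelling the `n` coordinates of an extended cyclic code of length `n - 1` whose
defining roots are powers of `a`: coordinate `i` of the cyclic code is labelled `a ^ i`, the parity
coordinate, which comes last, is labelled `0`. -/
def coordinatePoint {M : Type*} [MonoidWithZero M] (n : ℕ) (a : M) (i : Fin n) : M :=
  if (i : ℕ) < n - 1 then a ^ (i : ℕ) else 0

lemma sum_smul_coordinatePoint_pow {R S : Type*} [Semiring R] [CommSemiring S] [Module R S] (a : S)
    {n j : ℕ} (hj : j ≠ 0) (c : Fin n → R) :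
    ∑ i, c i • coordinatePoint n a i ^ j =
      ∑ i : Fin (n - 1), c (Fin.castLE (Nat.sub_le _ _) i) • (a ^ j) ^ (i : ℕ) := by
  cases n with
  | zero => rfl
  | succ n =>
    rw [Fin.sum_univ_castSucc]
    simp [coordinatePoint, hj, pow_right_comm a]
    rfl

variable {L : Type*} [Field L] [Finite L] {n : ℕ} (hn : Nat.card L = n) {a : L}
  (ha : orderOf a = n - 1)
include hn ha

lemma bijective_coordinatePoint : (coordinatePoint n a).Bijective := by
  refine Function.Injective.bijective_of_nat_card_le (fun i j hij => ?_) (by simp [hn])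
  have ha0 : a ≠ 0 := by
    rintro rfl
    have : 1 < Nat.card L := Finite.one_lt_card
    rw [orderOf_zero] at ha
    lia
  unfold coordinatePoint at hij
  split_ifs at hij with hi hj hj
  · exact Fin.ext (pow_injOn_Iio_orderOf (hi.trans_eq ha.symm) (hj.trans_eq ha.symm) hij)
  · exact absurd hij (pow_ne_zero _ ha0)
  · exact absurd hij.symm (pow_ne_zero _ ha0)
  · exact Fin.ext (by lia)

lemma adjoin_eq_top_of_orderOf (F : Type*) [Field F] [Algebra F L] :
    IntermediateField.adjoin F {a} = ⊤ := by
  refine eq_top_iff.2 fun x _ => ?_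
  obtain ⟨i, rfl⟩ := (bijective_coordinatePoint hn ha).2 x
  unfold coordinatePoint
  split_ifs
  · exact pow_mem (IntermediateField.mem_adjoin_simple_self F a) _
  · exact zero_mem _

end CoordinatePoint

lemma isCoprime_minpoly_of_adjoin_eq_top {F K L : Type*} [Field F] [Field K] [Field L] [Algebra F K]
    [Algebra F L] [Algebra K L] [IsScalarTower F K L] [FiniteDimensional F K]
    [FiniteDimensional F L] {a : L} (ha : IntermediateField.adjoin F {a} = ⊤) (b : K)
    (hlt : Module.finrank F K < Module.finrank F L) :
    IsCoprime (minpoly F a) (minpoly F (algebraMap K L b)) := by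
  have hb : IsIntegral F (algebraMap K L b) := Algebra.IsIntegral.isIntegral _
  rw [(minpoly.irreducible (Algebra.IsIntegral.isIntegral a)).coprime_iff_not_dvd]
  refine not_dvd_of_natDegree_lt (minpoly.ne_zero hb) ?_
  rw [(Field.primitive_element_iff_minpoly_natDegree_eq F a).1 ha,
    minpoly.algebraMap_eq (algebraMap K L).injective]
  exact (minpoly.natDegree_le b).trans_lt hlt

lemma aeval_codePoly {A : Type*} [CommRing A] [Algebra (ZMod 2) A] {n : ℕ} (c : Fin n → ZMod 2)
    (x : A) : aeval x (codePoly c) = ∑ i, c i • x ^ (i : ℕ) := by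
  simp only [codePoly, map_sum, map_mul, aeval_C, map_pow, aeval_X, Algebra.smul_def]

lemma algebraMap_norm_eq_pow (K : Type*) {L : Type*} [Field K] [Finite K] [Field L] [Algebra K L]
    [Algebra.IsQuadraticExtension K L] (x : L) :
    algebraMap K L (Algebra.norm K x) = x ^ (1 + Nat.card K) := by
  have hfinrank := Algebra.IsQuadraticExtension.finrank_eq_two K L
  have := Module.finite_of_finrank_eq_succ hfinrank
  have := Module.finite_of_finite K (M := L)
  rw [FiniteField.algebraMap_norm_eq_pow_sum, hfinrank, sum_range_succ, sum_range_one, pow_zero,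
    pow_one]

lemma coe_CEbarSub (m e : ℕ) (α : GaloisField 2 m) : (CEbarSub m e α : Set _) = CEbar m e α :=
  rfl

variable {m e : ℕ} {α : GaloisField 2 m} (hm : m ≠ 0) (hα : orderOf α = 2 ^ m - 1)
  {K : Type*} [Field K] [Finite K] [Algebra (ZMod 2) K] [Algebra K (GaloisField 2 m)]
  [Algebra.IsQuadraticExtension K (GaloisField 2 m)] (hK : Nat.card K = 2 ^ e)
include hm hα hK

lemma gE_dvd_iff (p : (ZMod 2)[X]) :
    gE m e α ∣ p ↔ aeval α p = 0 ∧ aeval (α ^ (1 + 2 ^ e)) p = 0 := by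
  have hcop : IsCoprime (minpoly (ZMod 2) α) (minpoly (ZMod 2) (α ^ (1 + 2 ^ e))) := by
    rw [← hK, ← algebraMap_norm_eq_pow]
    refine isCoprime_minpoly_of_adjoin_eq_top
      (adjoin_eq_top_of_orderOf (GaloisField.card 2 m hm) hα (ZMod 2)) _ ?_
    have := Module.finrank_mul_finrank (ZMod 2) K (GaloisField 2 m)
    rw [Algebra.IsQuadraticExtension.finrank_eq_two K] at this
    have : 0 < Module.finrank (ZMod 2) K := Module.finrank_pos
    lia
  rw [← minpoly.dvd_iff, ← minpoly.dvd_iff]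
  exact ⟨fun h => ⟨dvd_of_mul_right_dvd h, dvd_of_mul_left_dvd h⟩, fun h => hcop.mul_dvd h.1 h.2⟩

lemma CEbarSub_eq_dualCode :
    CEbarSub m e α = dualCode (normTraceCode (ZMod 2) K (coordinatePoint (2 ^ m) α)) := by
  ext c
  have hnorm : ∑ i, c i • Algebra.norm K (coordinatePoint (2 ^ m) α i) = 0 ↔
      ∑ i, c i • coordinatePoint (2 ^ m) α i ^ (1 + 2 ^ e) = 0 := by
    rw [← map_eq_zero (algebraMap K (GaloisField 2 m)), map_sum]
    simp only [ZMod.map_smul, algebraMap_norm_eq_pow, hK]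
  rw [mem_dualCode_normTraceCode, hnorm, sum_smul_coordinatePoint_pow α (by positivity)]
  have := sum_smul_coordinatePoint_pow α one_ne_zero c
  simp only [pow_one] at this
  rw [this]
  change gE m e α ∣ _ ∧ _ ↔ _
  rw [gE_dvd_iff hm hα hK, aeval_codePoly, aeval_codePoly]
  tauto

end CyclicCode

lemma exists_isQuadraticExtension_galoisField (p : ℕ) [Fact p.Prime] {e : ℕ} (he : e ≠ 0) :
    ∃ _ : Algebra (GaloisField p e) (GaloisField p (2 * e)),
      Algebra.IsQuadraticExtension (GaloisField p e) (GaloisField p (2 * e)) := by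
  have hcard := GaloisField.finrank p he
  have hcard' := GaloisField.finrank p (mul_ne_zero two_ne_zero he)
  obtain ⟨f⟩ := FiniteField.nonempty_algHom_of_finrank_dvd (F := ZMod p)
    (K := GaloisField p e) (L := GaloisField p (2 * e)) (by rw [hcard, hcard']; exact ⟨2, by ring⟩)
  algebraize [f.toRingHom]
  have hmul := Module.finrank_mul_finrank (ZMod p) (GaloisField p e) (GaloisField p (2 * e))
  rw [hcard, hcard'] at hmul
  exact ⟨_, ⟨mul_left_cancel₀ he (hmul.trans (mul_comm 2 e))⟩⟩

/-- Let `m ≥ 4` be even and `e = m/2`. Then `C̄_E^⊥` has dimension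
`1 + 3m/2`, minimum nonzero weight `2^{m−1} − 2^{(m−2)/2}`, and the stated weight
distribution, with no codewords of other weights; moreover `C̄_E` has dimension
`2^m − 1 − 3m/2` and minimum nonzero weight `4`. -/
theorem dual_code_parameters_case_b
    (m e : ℕ) (hm : 4 ≤ m) (he : 2 * e = m)
    (α : GaloisField 2 m) (hα : orderOf α = 2 ^ m - 1) :
    Module.finrank (ZMod 2) ↥(dualCode (CEbar m e α)) = 1 + 3 * m / 2 ∧
    IsLeast {i | ∃ y ∈ dualCode (CEbar m e α), y ≠ 0 ∧ hammingNorm y = i}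
      (2 ^ (m - 1) - 2 ^ ((m - 2) / 2)) ∧
    {y : Fin (2 ^ m) → ZMod 2 |
      y ∈ dualCode (CEbar m e α) ∧ hammingNorm y = 0}.ncard = 1 ∧
    {y : Fin (2 ^ m) → ZMod 2 | y ∈ dualCode (CEbar m e α) ∧
      hammingNorm y = 2 ^ (m - 1) - 2 ^ ((m - 2) / 2)}.ncard =
        (2 ^ (m / 2) - 1) * 2 ^ m ∧
    {y : Fin (2 ^ m) → ZMod 2 | y ∈ dualCode (CEbar m e α) ∧
      hammingNorm y = 2 ^ (m - 1)}.ncard = 2 ^ (m + 1) - 2 ∧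
    {y : Fin (2 ^ m) → ZMod 2 | y ∈ dualCode (CEbar m e α) ∧
      hammingNorm y = 2 ^ (m - 1) + 2 ^ ((m - 2) / 2)}.ncard =
        (2 ^ (m / 2) - 1) * 2 ^ m ∧
    {y : Fin (2 ^ m) → ZMod 2 | y ∈ dualCode (CEbar m e α) ∧
      hammingNorm y = 2 ^ m}.ncard = 1 ∧
    (∀ y ∈ dualCode (CEbar m e α), hammingNorm y ∈
      ({0, 2 ^ (m - 1) - 2 ^ ((m - 2) / 2), 2 ^ (m - 1),
        2 ^ (m - 1) + 2 ^ ((m - 2) / 2), 2 ^ m} : Set ℕ)) ∧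
    Module.finrank (ZMod 2) ↥(CEbarSub m e α) = 2 ^ m - 1 - 3 * m / 2 ∧
    IsLeast {i | ∃ c ∈ CEbar m e α, c ≠ 0 ∧ hammingNorm c = i} 4 := by
  obtain ⟨k, rfl⟩ : ∃ k, e = k + 1 := ⟨e - 1, by lia⟩
  subst he
  obtain ⟨_, _⟩ := exists_isQuadraticExtension_galoisField 2 k.succ_ne_zero
  set K := GaloisField 2 (k + 1)
  have hL : Nat.card (GaloisField 2 (2 * (k + 1))) = 2 ^ (2 * (k + 1)) :=
    GaloisField.card 2 _ (by lia)
  have hK : Nat.card K = 2 ^ (k + 1) := GaloisField.card 2 _ k.succ_ne_zero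
  have hP := bijective_coordinatePoint hL hα
  set P := coordinatePoint _ α
  have hdim : Module.finrank (ZMod 2) (normTraceCode (ZMod 2) K P) = 1 + 3 * (k + 1) := by
    rw [finrank_normTraceCode hK hP, GaloisField.finrank 2 (by lia), GaloisField.finrank 2 (by lia)]
    ring
  have hcode := CEbarSub_eq_dualCode (by lia) hα hK
  rw [← coe_CEbarSub, hcode, dualCode_dualCode, finrank_dualCode, hdim]
  simp only [show 2 * (k + 1) - 1 = 2 * k + 1 by lia, show (2 * (k + 1) - 2) / 2 = k by lia,
    show 2 * (k + 1) / 2 = k + 1 by lia]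
  refine ⟨by lia, isLeast_hammingNorm_normTraceCode hK hP, ncard_hammingNorm_eq_zero _, ?_, ?_, ?_,
    ?_, fun _ => hammingNorm_mem_of_mem_normTraceCode hK hP, by lia,
    isLeast_hammingNorm_dualCode_normTraceCode ?_ hP⟩
  · rw [ncard_normTraceCode_low hK hP, hK, hL]
  · rw [ncard_normTraceCode_mid hK hP, hL]
    lia
  · rw [ncard_normTraceCode_high hK hP, hK, hL]
  · simpa using ncard_hammingNorm_eq_card (one_mem_normTraceCode K P)
  · exact hK ▸ lt_self_pow₀ one_lt_two (by lia)
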